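/- Let λ > 0 and 0 < σ < 1. The integrals defining K_σ^λ(x,y) and B_σ^λ(x) converge absolutely for all x, y > 0 with x ≠ y, and there exists a constant C = C(λ, σ) > 0 such that: (a) 0 ≤ K_σ^λ(x,y) ≤ C |x−y|^{−1−2σ} for all x, y > 0 with x ≠ y; (b) |B_σ^λ(x)| ≤ C x^{−2σ} for all x > 0; (c) the function B_σ^λ is continuous on ℝ₊. -/

import Mathlib

open Real MeasureTheory Set Filter

noncomputable section

/-- The modified Bessel function of the first kind `I_ν(z)`. -/
def besselI (ν z : ℝ) : ℝ :=
  ∑' k : ℕ, (z / 2) ^ (2 * (k : ℝ) + ν) / ((Nat.factorial k : ℝ) * Real.Gamma ((k : ℝ) + ν + 1))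

/-- The Bessel heat kernel `W_t^λ(x,y)`. -/
def besselHeatKernel (lam t x y : ℝ) : ℝ :=
  Real.sqrt (x * y) / (2 * t) * besselI (lam - 1 / 2) (x * y / (2 * t)) *
    Real.exp (-(x ^ 2 + y ^ 2) / (4 * t))

/-- The Bessel–Poisson kernel `P_t^λ(x,y)`, obtained by subordination. -/
def besselPoissonKernel (lam t x y : ℝ) : ℝ :=
  t / (2 * Real.sqrt Real.pi) *
    ∫ s in Set.Ioi (0 : ℝ),
      s ^ (-(3 : ℝ) / 2) * Real.exp (-t ^ 2 / (4 * s)) * besselHeatKernel lam s x y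

/-- The Bessel heat semigroup `W_t^λ u (x)`. -/
def heatSemigroup (lam : ℝ) (u : ℝ → ℝ) (t x : ℝ) : ℝ :=
  ∫ y in Set.Ioi (0 : ℝ), besselHeatKernel lam t x y * u y

/-- The Bessel–Poisson semigroup `P_t^λ f (x)`. -/
def poissonSemigroup (lam : ℝ) (f : ℝ → ℝ) (t x : ℝ) : ℝ :=
  ∫ y in Set.Ioi (0 : ℝ), besselPoissonKernel lam t x y * f y

/-- The set of Hölder quotients of `f` on `(0,∞)`. -/
def holderRatioSet (α : ℝ) (f : ℝ → ℝ) : Set ℝ :=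
  {r | ∃ x y : ℝ, 0 < x ∧ 0 < y ∧ x ≠ y ∧ r = |f x - f y| / |x - y| ^ α}

/-- The set of growth quotients `|f x|/x^α` of `f` on `(0,∞)`. -/
def growthRatioSet (α : ℝ) (f : ℝ → ℝ) : Set ℝ :=
  {r | ∃ x : ℝ, 0 < x ∧ r = |f x| / x ^ α}

/-- Membership in the Hölder space `C^α_+` (equal to `Lip_+` when `α = 1`). -/
def MemHolderPlus (α : ℝ) (f : ℝ → ℝ) : Prop :=
  ContinuousOn f (Set.Ioi 0) ∧ BddAbove (holderRatioSet α f) ∧ BddAbove (growthRatioSet α f)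

/-- The `C^α_+` norm. -/
def holderPlusNorm (α : ℝ) (f : ℝ → ℝ) : ℝ :=
  sSup (holderRatioSet α f) + sSup (growthRatioSet α f)

/-- `Γ(-σ)`, written through the functional equation `Γ(-σ) = Γ(2-σ)/((-σ)(1-σ))`. -/
def gammaNeg (σ : ℝ) : ℝ := Real.Gamma (2 - σ) / (-σ * (1 - σ))

/-- The kernel `K_σ^λ(x,y)`. -/
def fracKernelK (lam σ x y : ℝ) : ℝ :=
  1 / (-gammaNeg σ) * ∫ t in Set.Ioi (0 : ℝ), besselHeatKernel lam t x y * t ^ (-1 - σ)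

/-- `W_t^λ 1 (x)`. -/
def heatOne (lam t x : ℝ) : ℝ := ∫ y in Set.Ioi (0 : ℝ), besselHeatKernel lam t x y

/-- The function `B_σ^λ(x)`. -/
def fracFunB (lam σ x : ℝ) : ℝ :=
  1 / gammaNeg σ * ∫ t in Set.Ioi (0 : ℝ), (heatOne lam t x - 1) * t ^ (-1 - σ)

/-- The integer `m` with `m - 1 ≤ β < m`. -/
def fracOrder (β : ℝ) : ℕ := Nat.floor β + 1

/-- The Segovia–Wheeden fractional derivative `∂_t^β F(t)`, a complex number. -/
def fracDeriv (β : ℝ) (F : ℝ → ℝ) (t : ℝ) : ℂ :=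
  Complex.exp (-(Real.pi * ((fracOrder β : ℝ) - β)) * Complex.I) /
      Complex.ofReal (Real.Gamma ((fracOrder β : ℝ) - β)) *
    Complex.ofReal
      (∫ s in Set.Ioi (0 : ℝ),
        iteratedDeriv (fracOrder β) F (t + s) * s ^ ((fracOrder β : ℝ) - β - 1))

/-!
Put `q = xy / (4t)`. Then `W_t^λ(x,y) = t^{-1/2} e^{-(x²+y²)/(4t)} · √q I_{λ-1/2}(2q)`, and
Poisson's integral for the Bessel function, together with `√(1 - u) ≤ 1 - u/2`, bounds
`√q I_{λ-1/2}(2q)` by `π^{-1/2} e^{2q}` times a normalised Laplace transform of a beta weight, which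
is bounded. Since `x² + y² - 2xy = (x - y)²`, the heat kernel is dominated by the
Gauss–Weierstrass kernel, and integrating against `t^{-1-σ}` gives the estimate for `K_σ^λ`.

Integrating the Bessel series in `y` termwise shows that `W_t^λ 1(x)` depends on `w = x² / (4t)`
only, and is again such a Laplace transform, by Kummer's transformation. It is bounded, and it is
`1 + O(1/w)` at infinity by Watson's lemma; this is what makes the integral of `B_σ^λ` converge at
both ends for `0 < σ < 1`. The substitution `w = x² / (4t)` then shows that `B_σ^λ` is a constant
multiple of `x^{-2σ}`, whence its bound and its continuity.
-/

theorem rpow_mul_exp_neg_mul_le {q w u : ℝ} (hq : 0 < q) (hw : 0 < w) (hu : 0 ≤ u) :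
    u ^ q * exp (-(w * u)) ≤ (q / w) ^ q := by
  have hle : u ≤ q / w * exp (w * u / q) := by
    have := add_one_le_exp (w * u / q)
    calc u = q / w * (w * u / q) := by field_simp
      _ ≤ q / w * exp (w * u / q) := by gcongr; linarith
  calc u ^ q * exp (-(w * u))
      ≤ (q / w * exp (w * u / q)) ^ q * exp (-(w * u)) := by gcongr
    _ = (q / w) ^ q * (exp (w * u) * exp (-(w * u))) := by
      rw [mul_rpow (by positivity) (exp_pos _).le, ← exp_mul, div_mul_cancel₀ _ hq.ne', mul_assoc]
    _ = (q / w) ^ q := by rw [← exp_add, add_neg_cancel, exp_zero, mul_one]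

theorem integrableOn_rpow_mul_exp_neg_mul_Ioi {a r : ℝ} (ha : 0 < a) (hr : 0 < r) :
    IntegrableOn (fun t => t ^ (a - 1) * exp (-(r * t))) (Ioi 0) :=
  .of_integral_ne_zero <| by
    rw [integral_rpow_mul_exp_neg_mul_Ioi ha hr]
    have := Gamma_pos_of_pos ha
    positivity

theorem integral_rpow_mul_one_sub_rpow {a b : ℝ} (ha : 0 < a) (hb : 0 < b) :
    ∫ u in Ioo (0 : ℝ) 1, u ^ (a - 1) * (1 - u) ^ (b - 1) = ProbabilityTheory.beta a b := by
  rw [ProbabilityTheory.beta_eq_betaIntegralReal a b ha hb, Complex.betaIntegral,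
    intervalIntegral.integral_of_le zero_le_one, ← integral_Ioc_eq_integral_Ioo,
    ← RCLike.re_eq_complex_re, ← integral_re]
  · refine setIntegral_congr_fun measurableSet_Ioc fun u hu => ?_
    norm_cast
    rw [← Complex.ofReal_cpow hu.1.le, ← Complex.ofReal_cpow (sub_nonneg.2 hu.2),
      RCLike.re_eq_complex_re, Complex.re_mul_ofReal, Complex.ofReal_re]
  · exact (intervalIntegrable_iff_integrableOn_Ioc_of_le zero_le_one).1
      (Complex.betaIntegral_convergent (by simpa) (by simpa))

theorem integrableOn_rpow_mul_one_sub_rpow {a b : ℝ} (ha : 0 < a) (hb : 0 < b) :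
    IntegrableOn (fun u : ℝ => u ^ (a - 1) * (1 - u) ^ (b - 1)) (Ioo 0 1) :=
  .of_integral_ne_zero <| by
    rw [integral_rpow_mul_one_sub_rpow ha hb]
    exact (ProbabilityTheory.beta_pos ha hb).ne'

section TermwiseIntegration

variable {α : Type*} [MeasurableSpace α] {μ : Measure α} {F : ℕ → α → ℝ} {f : α → ℝ}

theorem aestronglyMeasurable_of_hasSum (hF : ∀ k, AEStronglyMeasurable (F k) μ)
    (hsum : ∀ᵐ u ∂μ, HasSum (F · u) (f u)) : AEStronglyMeasurable f μ :=
  aestronglyMeasurable_of_tendsto_ae atTop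
    (fun n => Finset.aestronglyMeasurable_fun_sum (Finset.range n) fun k _ => hF k)
    (hsum.mono fun _ hu => hu.tendsto_sum_nat)

theorem hasSum_integral_of_nonneg (hF : ∀ k, AEStronglyMeasurable (F k) μ)
    (hF0 : ∀ k, ∀ᵐ u ∂μ, 0 ≤ F k u) (hsum : ∀ᵐ u ∂μ, HasSum (F · u) (f u))
    (hf : Integrable f μ) : HasSum (fun k => ∫ u, F k u ∂μ) (∫ u, f u ∂μ) :=
  hasSum_integral_of_dominated_convergence F hF
    (fun k => (hF0 k).mono fun _ hu => (norm_of_nonneg hu).le)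
    (hsum.mono fun _ hu => hu.summable)
    (hf.congr (hsum.mono fun _ hu => hu.tsum_eq.symm)) hsum

theorem integral_eq_of_hasSum_of_nonneg {S : ℝ} (hF : ∀ k, Integrable (F k) μ)
    (hF0 : ∀ k, ∀ᵐ u ∂μ, 0 ≤ F k u) (hsum : ∀ᵐ u ∂μ, HasSum (F · u) (f u))
    (hS : HasSum (fun k => ∫ u, F k u ∂μ) S) : ∫ u, f u ∂μ = S := by
  have hnorm (k : ℕ) : ∫ u, ‖F k u‖ ∂μ = ∫ u, F k u ∂μ :=
    integral_congr_ae ((hF0 k).mono fun _ hu => norm_of_nonneg hu)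
  rw [integral_congr_ae (hsum.mono fun _ hu => hu.tsum_eq.symm)]
  exact (hasSum_integral_of_summable_integral_norm hF
    (by simpa only [hnorm] using hS.summable)).unique hS

end TermwiseIntegration

theorem hasSum_integral_beta_mul {a b : ℝ} (ha : 0 < a) (hb : 0 < b) {c : ℕ → ℝ}
    (hc : ∀ k, 0 ≤ c k) {g : ℝ → ℝ} (hg : ContinuousOn g (Icc 0 1))
    (hsum : ∀ u ∈ Ioo (0 : ℝ) 1, HasSum (fun k => c k * (1 - u) ^ k) (g u)) :
    HasSum (fun k : ℕ => c k * ProbabilityTheory.beta a (k + b))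
      (∫ u in Ioo (0 : ℝ) 1, u ^ (a - 1) * (1 - u) ^ (b - 1) * g u) := by
  have hterm : ∀ k : ℕ, EqOn (fun u : ℝ => c k * (u ^ (a - 1) * (1 - u) ^ (k + b - 1)))
      (fun u => u ^ (a - 1) * (1 - u) ^ (b - 1) * (c k * (1 - u) ^ k)) (Ioo 0 1) := by
    intro k u hu
    have h1u : 0 < 1 - u := sub_pos.2 hu.2
    simp only [add_sub_assoc, rpow_add h1u, rpow_natCast]
    ring
  have hval (k : ℕ) : ∫ u in Ioo (0 : ℝ) 1, u ^ (a - 1) * (1 - u) ^ (b - 1) * (c k * (1 - u) ^ k)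
      = c k * ProbabilityTheory.beta a (k + b) := by
    rw [← integral_rpow_mul_one_sub_rpow ha (show 0 < (k : ℝ) + b by positivity),
      ← integral_const_mul, setIntegral_congr_fun measurableSet_Ioo (hterm k)]
  simp only [← hval]
  refine hasSum_integral_of_nonneg
    (fun k => Measurable.aestronglyMeasurable (by fun_prop))
    (fun k => ?_) ?_ ?_
  · filter_upwards [ae_restrict_mem measurableSet_Ioo] with u hu
    have := hc k
    have := hu.1
    have := sub_pos.2 hu.2
    positivity
  · filter_upwards [ae_restrict_mem measurableSet_Ioo] with u hu
    exact (hsum u hu).mul_left _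
  · exact (integrableOn_rpow_mul_one_sub_rpow ha hb).mul_continuousOn_of_subset hg
      measurableSet_Ioo isCompact_Icc Ioo_subset_Icc_self

theorem abs_one_sub_rpow_sub_one_le {b u : ℝ} (hb : 0 < b) (hu : u ∈ Ioo (0 : ℝ) 1) :
    |(1 - u) ^ (b - 1) - 1| ≤ (b + 1) * u + u ^ 2 * (1 - u) ^ (b - 1) := by
  have hu0 : 0 < u := hu.1
  have h1u : 0 < 1 - u := sub_pos.2 hu.2
  set p := (1 - u) ^ (b - 1)
  have : 0 < p := rpow_pos_of_pos h1u _
  have hmul : (1 - u) * p ≤ 1 := by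
    rw [mul_comm, ← rpow_add_one h1u.ne', sub_add_cancel]
    exact rpow_le_one h1u.le (by linarith) hb.le
  have hbernoulli : 1 - (b + 1) * u ≤ p :=
    calc 1 - (b + 1) * u ≤ (1 - u) ^ (b + 1) := by
          have := one_add_mul_self_le_rpow_one_add (s := -u) (by linarith)
            (show 1 ≤ b + 1 by linarith)
          rwa [mul_neg, ← sub_eq_add_neg, ← sub_eq_add_neg] at this
      _ ≤ p := rpow_le_rpow_of_exponent_ge h1u (by linarith) (by linarith)
  have hup : u * p ≤ u + u ^ 2 * p := by linarith [mul_le_mul_of_nonneg_left hmul hu0.le]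
  have hbu : 0 < b * u := mul_pos hb hu0
  rw [abs_sub_le_iff]
  constructor
  · linarith
  · linarith [show 0 < u ^ 2 * p by positivity]

theorem rpow_mul_exp_neg_mul_mul_le {a w A u c d : ℝ} (ha : 0 < a) (hw : 0 < w) (hu : 0 < u)
    (hd : 0 ≤ d) (hc : c ≤ A * u + u ^ 2 * d) :
    u ^ (a - 1) * exp (-(w * u)) * c ≤
      A * (u ^ a * exp (-(w * u))) + ((a + 1) / w) ^ (a + 1) * d := by
  have hpow1 : u ^ (a - 1) * u = u ^ a := by rw [← rpow_add_one hu.ne', sub_add_cancel]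
  have hpow2 : u ^ (a - 1) * u ^ 2 = u ^ (a + 1) := by
    rw [sq, ← mul_assoc, hpow1, ← rpow_add_one hu.ne']
  calc u ^ (a - 1) * exp (-(w * u)) * c
      ≤ u ^ (a - 1) * exp (-(w * u)) * (A * u + u ^ 2 * d) := by gcongr
    _ = A * (u ^ a * exp (-(w * u))) + u ^ (a + 1) * exp (-(w * u)) * d := by
        rw [← hpow1, ← hpow2]
        ring
    _ ≤ A * (u ^ a * exp (-(w * u))) + ((a + 1) / w) ^ (a + 1) * d := by
        gcongr
        exact rpow_mul_exp_neg_mul_le (by linarith) hw hu.le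

theorem abs_indicator_one_sub_rpow_sub_one_le {b u : ℝ} (hb : 0 < b) (hu : 0 < u) :
    |(Ioo 0 1).indicator (fun u => (1 - u) ^ (b - 1)) u - 1| ≤
      (b + 1) * u + u ^ 2 * (Ioo 0 1).indicator (fun u => (1 - u) ^ (b - 1)) u := by
  rcases lt_or_ge u 1 with hu1 | hu1
  · simpa [hu, hu1] using abs_one_sub_rpow_sub_one_le hb ⟨hu, hu1⟩
  · rw [indicator_of_notMem fun h => h.2.not_ge hu1, zero_sub, abs_neg, abs_one, mul_zero, add_zero]
    nlinarith

/-- Watson's lemma to first order. Both error terms gain a factor `1 / w`: the part `u ^ 2 * h u`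
because `u ^ (a + 1) * exp (-(w * u))` is at most a multiple of `1 / w ^ (a + 1)` pointwise, which
allows `h` to be unbounded. -/
theorem abs_integral_rpow_mul_exp_neg_mul_sub_le {a w A : ℝ} {g h : ℝ → ℝ} (ha : 0 < a)
    (hw : 0 < w)
    (hg : IntegrableOn (fun u => u ^ (a - 1) * exp (-(w * u)) * g u) (Ioi 0))
    (hh : IntegrableOn h (Ioi 0)) (hh0 : ∀ u, 0 < u → 0 ≤ h u)
    (hgh : ∀ u, 0 < u → |g u - 1| ≤ A * u + u ^ 2 * h u) :
    |(∫ u in Ioi 0, u ^ (a - 1) * exp (-(w * u)) * g u) - Gamma a / w ^ a| ≤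
      (A * Gamma (a + 1) + (a + 1) ^ (a + 1) * ∫ u in Ioi 0, h u) / w ^ (a + 1) := by
  have ha1 : 0 < a + 1 := by linarith
  have hGamma {c : ℝ} (hc : 0 < c) :
      ∫ u in Ioi 0, u ^ (c - 1) * exp (-(w * u)) = Gamma c / w ^ c := by
    rw [integral_rpow_mul_exp_neg_mul_Ioi hc hw, one_div, inv_rpow hw.le, inv_mul_eq_div]
  have hbound : ∀ u ∈ Ioi (0 : ℝ),
      ‖u ^ (a - 1) * exp (-(w * u)) * g u - u ^ (a - 1) * exp (-(w * u))‖ ≤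
        A * (u ^ (a + 1 - 1) * exp (-(w * u))) + ((a + 1) / w) ^ (a + 1) * h u := by
    intro u (hu : 0 < u)
    rw [← mul_sub_one, norm_eq_abs, abs_mul, abs_of_nonneg (by positivity), add_sub_cancel_right]
    exact rpow_mul_exp_neg_mul_mul_le ha hw hu (hh0 u hu) (hgh u hu)
  have hint1 := (integrableOn_rpow_mul_exp_neg_mul_Ioi ha1 hw).const_mul A
  have hint2 := hh.const_mul (((a + 1) / w) ^ (a + 1))
  rw [← hGamma ha, ← integral_sub hg (integrableOn_rpow_mul_exp_neg_mul_Ioi ha hw)]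
  refine (norm_integral_le_of_norm_le (hint1.add hint2)
    ((ae_restrict_mem measurableSet_Ioi).mono hbound)).trans_eq ?_
  rw [integral_add' hint1 hint2, integral_const_mul, integral_const_mul, hGamma ha1,
    div_rpow ha1.le hw.le]
  ring

/-- The Laplace transform `∫₀¹ u^{a-1} (1-u)^{b-1} e^{-wu} du` of a beta weight, divided by its
leading asymptotics `Γ(a) w^{-a}` at infinity. In terms of Kummer's function this is
`Γ(b) / Γ(a + b) * w^a * M(a, a + b, -w)`. -/
def betaLaplace (a b w : ℝ) : ℝ :=
  w ^ a / Gamma a * ∫ u in Ioo (0 : ℝ) 1, u ^ (a - 1) * (1 - u) ^ (b - 1) * exp (-(w * u))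

section BetaLaplace

variable {a b w : ℝ}

theorem integrableOn_rpow_mul_one_sub_rpow_mul_exp (ha : 0 < a) (hb : 0 < b) (w : ℝ) :
    IntegrableOn (fun u : ℝ => u ^ (a - 1) * (1 - u) ^ (b - 1) * exp (-(w * u))) (Ioo 0 1) :=
  (integrableOn_rpow_mul_one_sub_rpow ha hb).mul_continuousOn_of_subset (by fun_prop)
    measurableSet_Ioo isCompact_Icc Ioo_subset_Icc_self

theorem betaLaplace_nonneg (ha : 0 < a) (hw : 0 ≤ w) : 0 ≤ betaLaplace a b w := by
  have := Gamma_pos_of_pos ha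
  refine mul_nonneg (by positivity) (setIntegral_nonneg measurableSet_Ioo fun u hu => ?_)
  have := hu.1
  have := sub_pos.2 hu.2
  positivity

theorem measurable_betaLaplace (a b : ℝ) : Measurable (betaLaplace a b) := by
  refine Measurable.mul (by fun_prop) (StronglyMeasurable.integral_prod_right'
    (f := fun p : ℝ × ℝ => p.2 ^ (a - 1) * (1 - p.2) ^ (b - 1) * exp (-(p.1 * p.2)))
    (Measurable.stronglyMeasurable (by fun_prop))).measurable

theorem rpow_mul_exp_neg_mul_mul_indicator (a b w : ℝ) :
    (fun u => u ^ (a - 1) * exp (-(w * u)) *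
      (Ioo 0 1).indicator (fun u => (1 - u) ^ (b - 1)) u) =
      (Ioo 0 1).indicator fun u => u ^ (a - 1) * (1 - u) ^ (b - 1) * exp (-(w * u)) := by
  ext u
  rw [← indicator_mul_right (Ioo 0 1) fun u => u ^ (a - 1) * exp (-(w * u))]
  simp only [mul_right_comm]

theorem betaLaplace_sub_one (ha : 0 < a) (hw : 0 < w) :
    betaLaplace a b w - 1 = w ^ a / Gamma a *
      ((∫ u in Ioi 0, u ^ (a - 1) * exp (-(w * u)) *
        (Ioo 0 1).indicator (fun u => (1 - u) ^ (b - 1)) u) - Gamma a / w ^ a) := by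
  have hΓ := Gamma_pos_of_pos ha
  rw [rpow_mul_exp_neg_mul_mul_indicator, setIntegral_indicator measurableSet_Ioo,
    inter_eq_self_of_subset_right fun u hu => hu.1, mul_sub, div_mul_div_cancel₀ hΓ.ne',
    div_self (by positivity), betaLaplace]

theorem exists_abs_betaLaplace_sub_one_le (ha : 0 < a) (hb : 0 < b) :
    ∃ D, 0 < D ∧ ∀ w, 0 < w → |betaLaplace a b w - 1| ≤ D / w := by
  have := Gamma_pos_of_pos ha
  have := Gamma_pos_of_pos (show 0 < a + 1 by linarith)
  let p : ℝ → ℝ := (Ioo 0 1).indicator fun u => (1 - u) ^ (b - 1)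
  have hp0 (u : ℝ) : 0 ≤ p u :=
    indicator_nonneg (fun u hu => rpow_nonneg (sub_nonneg.2 hu.2.le) _) u
  have hp : IntegrableOn p (Ioi 0) := by
    have := integrableOn_rpow_mul_one_sub_rpow one_pos hb
    simp only [sub_self, rpow_zero, one_mul] at this
    exact (this.integrable_indicator measurableSet_Ioo).integrableOn
  set P := ∫ u in Ioi 0, p u
  have hP : 0 ≤ P := setIntegral_nonneg measurableSet_Ioi fun u _ => hp0 u
  refine ⟨((b + 1) * Gamma (a + 1) + (a + 1) ^ (a + 1) * P) / Gamma a, by positivity,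
    fun w hw => ?_⟩
  have hint : IntegrableOn (fun u => u ^ (a - 1) * exp (-(w * u)) * p u) (Ioi 0) := by
    rw [rpow_mul_exp_neg_mul_mul_indicator]
    exact ((integrableOn_rpow_mul_one_sub_rpow_mul_exp ha hb w).integrable_indicator
      measurableSet_Ioo).integrableOn
  rw [betaLaplace_sub_one ha hw, abs_mul, abs_of_pos (by positivity)]
  calc w ^ a / Gamma a *
        |(∫ u in Ioi 0, u ^ (a - 1) * exp (-(w * u)) * p u) - Gamma a / w ^ a|
      ≤ w ^ a / Gamma a *
          (((b + 1) * Gamma (a + 1) + (a + 1) ^ (a + 1) * P) / w ^ (a + 1)) := by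
        gcongr
        exact abs_integral_rpow_mul_exp_neg_mul_sub_le ha hw hint hp (fun u _ => hp0 u)
          fun u hu => abs_indicator_one_sub_rpow_sub_one_le hb hu
    _ = ((b + 1) * Gamma (a + 1) + (a + 1) ^ (a + 1) * P) / Gamma a / w := by
        rw [rpow_add_one hw.ne']
        field_simp

theorem exists_betaLaplace_le (ha : 0 < a) (hb : 0 < b) :
    ∃ M, 0 < M ∧ ∀ w, 0 < w → betaLaplace a b w ≤ M := by
  obtain ⟨D, hD, hle⟩ := exists_abs_betaLaplace_sub_one_le ha hb
  have := Gamma_pos_of_pos ha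
  have hB := ProbabilityTheory.beta_pos ha hb
  refine ⟨1 / Gamma a * ProbabilityTheory.beta a b + (1 + D), by positivity, fun w hw => ?_⟩
  rcases le_total w 1 with hw1 | hw1
  · have hint : ∫ u in Ioo (0 : ℝ) 1, u ^ (a - 1) * (1 - u) ^ (b - 1) * exp (-(w * u)) ≤
        ProbabilityTheory.beta a b := by
      rw [← integral_rpow_mul_one_sub_rpow ha hb]
      refine setIntegral_mono_on (integrableOn_rpow_mul_one_sub_rpow_mul_exp ha hb w)
        (integrableOn_rpow_mul_one_sub_rpow ha hb) measurableSet_Ioo fun u hu => ?_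
      have h0 := hu.1
      have h1 := sub_pos.2 hu.2
      exact mul_le_of_le_one_right (by positivity) (exp_le_one_iff.2 (by nlinarith))
    have hpow : w ^ a ≤ 1 := rpow_le_one hw.le hw1 ha.le
    calc betaLaplace a b w ≤ w ^ a / Gamma a * ProbabilityTheory.beta a b := by
          unfold betaLaplace
          gcongr
      _ ≤ 1 / Gamma a * ProbabilityTheory.beta a b := by gcongr
      _ ≤ _ := by linarith
  · calc betaLaplace a b w ≤ 1 + D / w := by linarith [le_of_abs_le (hle w hw)]
      _ ≤ 1 + D := by gcongr; exact div_le_self hD.le hw1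
      _ ≤ _ := le_add_of_nonneg_left (by positivity)

/-- Kummer's transformation: expanding `exp (-(w * u))` in powers of `1 - u` rather than `u` makes
all coefficients nonnegative. -/
theorem hasSum_betaLaplace (ha : 0 < a) (hb : 0 < b) (hw : 0 < w) :
    HasSum (fun k : ℕ => exp (-w) *
      (w ^ (k + a) * Gamma (k + b) / (k.factorial * Gamma (k + (a + b))))) (betaLaplace a b w) := by
  have hexp (u : ℝ) : HasSum (fun k : ℕ => exp (-w) * (w ^ k / k.factorial) * (1 - u) ^ k)
      (exp (-(w * u))) := by
    rw [show -(w * u) = -w + w * (1 - u) by ring, exp_add, exp_eq_exp_ℝ]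
    refine ((NormedSpace.expSeries_div_hasSum_exp (w * (1 - u))).mul_left _).congr_fun fun k => ?_
    rw [mul_pow]
    ring
  have key := (hasSum_integral_beta_mul ha hb (fun k => by positivity)
    (Continuous.continuousOn (by fun_prop)) fun u _ => hexp u).mul_left (w ^ a / Gamma a)
  refine key.congr_fun fun k => ?_
  have hΓ := (Gamma_pos_of_pos ha).ne'
  rw [ProbabilityTheory.beta, rpow_add hw, rpow_natCast, add_left_comm]
  field_simp

theorem integrableOn_rpow_mul_betaLaplace_sub_one {τ : ℝ} (ha : 0 < a) (hb : 0 < b)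
    (hτ0 : 0 < τ) (hτ1 : τ < 1) :
    IntegrableOn (fun w => w ^ (τ - 1) * (betaLaplace a b w - 1)) (Ioi 0) := by
  obtain ⟨M, -, hM⟩ := exists_betaLaplace_le ha hb
  obtain ⟨D, -, hD⟩ := exists_abs_betaLaplace_sub_one_le ha hb
  have hbdd : ∀ w ∈ Ioi (0 : ℝ), ‖betaLaplace a b w - 1‖ ≤ M + 1 := fun w hw => by
    have := betaLaplace_nonneg ha (le_of_lt hw) (b := b)
    rw [norm_eq_abs, abs_le]
    constructor <;> linarith [hM w hw]
  refine mellin_convergent_of_isBigO_scalar (a := 1) (b := 0) ?_ ?_ hτ1 ?_ hτ0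
  · exact (locallyIntegrableOn_iff isOpen_Ioi.isLocallyClosed).2 fun k hk hkc =>
      Measure.integrableOn_of_bounded hkc.measure_lt_top.ne
        ((measurable_betaLaplace a b).sub_const 1).aestronglyMeasurable
        (ae_restrict_of_forall_mem hkc.measurableSet fun w hw => hbdd w (hk hw))
  · refine Asymptotics.IsBigO.of_bound D ?_
    filter_upwards [eventually_gt_atTop 0] with w hw
    rw [rpow_neg_one, norm_inv, norm_of_nonneg hw.le, ← div_eq_mul_inv]
    exact hD w hw
  · refine Asymptotics.IsBigO.of_bound (M + 1) ?_
    filter_upwards [self_mem_nhdsWithin] with w hw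
    simpa using hbdd w hw

end BetaLaplace

section Inversion

variable {f : ℝ → ℝ} {r τ : ℝ}

/- The right-hand side is the integrand after the substitutions `t ↦ t⁻¹` and `w = r * t`. -/
theorem comp_div_mul_rpow_eq {t : ℝ} (hr : 0 < r) (ht : 0 < t) :
    f (r / t) * t ^ (-1 - τ) = r ^ (1 - τ) *
      (t ^ (-1 - 1 : ℝ) * ((r * t ^ (-1 : ℝ)) ^ (τ - 1) * f (r * t ^ (-1 : ℝ)))) := by
  have hpow : t ^ (-1 - τ) = r ^ (1 - τ) * (t ^ (-1 - 1 : ℝ) * (r / t) ^ (τ - 1)) := by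
    rw [div_rpow hr.le ht.le, div_eq_mul_inv, ← rpow_neg ht.le, mul_left_comm (t ^ (-1 - 1 : ℝ)),
      ← rpow_add ht, ← mul_assoc, ← rpow_add hr, sub_add_sub_cancel, sub_self, rpow_zero, one_mul]
    congr 1
    ring
  rw [hpow, rpow_neg_one, ← div_eq_mul_inv]
  ring

theorem integrableOn_comp_div_mul_rpow_iff (hr : 0 < r) :
    IntegrableOn (fun t => f (r / t) * t ^ (-1 - τ)) (Ioi 0) ↔
      IntegrableOn (fun w => w ^ (τ - 1) * f w) (Ioi 0) := by
  rw [integrableOn_congr_fun (fun t (ht : t ∈ Ioi 0) => comp_div_mul_rpow_eq hr ht)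
    measurableSet_Ioi, IntegrableOn, integrable_const_mul_iff (rpow_pos_of_pos hr _).ne'.isUnit]
  have hinv := integrableOn_Ioi_comp_rpow_iff' (fun t => (r * t) ^ (τ - 1) * f (r * t))
    (show (-1 : ℝ) ≠ 0 by norm_num)
  have hscale := integrableOn_Ioi_comp_mul_left_iff (fun w => w ^ (τ - 1) * f w) 0 hr
  rw [mul_zero] at hscale
  exact hinv.trans hscale

theorem integral_comp_div_mul_rpow (hr : 0 < r) :
    ∫ t in Ioi 0, f (r / t) * t ^ (-1 - τ) = r ^ (-τ) * ∫ w in Ioi 0, w ^ (τ - 1) * f w := by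
  have hinv := integral_comp_rpow_Ioi (fun t => (r * t) ^ (τ - 1) * f (r * t))
    (show (-1 : ℝ) ≠ 0 by norm_num)
  have hscale := integral_comp_mul_left_Ioi (fun w => w ^ (τ - 1) * f w) 0 hr
  simp only [abs_neg, abs_one, one_mul, smul_eq_mul, mul_zero] at hinv hscale
  rw [setIntegral_congr_fun measurableSet_Ioi fun t ht => comp_div_mul_rpow_eq hr ht,
    integral_const_mul, hinv, hscale, ← mul_assoc, ← rpow_neg_one, ← rpow_add hr]
  congr 2
  ring

end Inversion

theorem Gamma_nat_add_half_eq_factorial_div (k : ℕ) :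
    Gamma (k + 1 / 2) = (2 * k).factorial * √π / (4 ^ k * k.factorial) := by
  have h := Gamma_mul_Gamma_add_half (k + 1 / 2)
  rw [add_assoc, add_halves, Gamma_nat_eq_factorial,
    show 2 * ((k : ℝ) + 1 / 2) = (2 * k : ℕ) + 1 by push_cast; ring, Gamma_nat_eq_factorial,
    show (1 : ℝ) - ((2 * k : ℕ) + 1) = -((2 * k : ℕ) : ℝ) by ring, rpow_neg zero_le_two,
    rpow_natCast, pow_mul, show (2 : ℝ) ^ 2 = 4 by norm_num] at h
  rw [eq_div_iff (by positivity), mul_left_comm, h]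
  field_simp

section Bessel

variable {lam q : ℝ}

/-- Poisson's integral for `√q * I_{λ-1/2}(2q)`, by integrating the series of `cosh` termwise. -/
theorem hasSum_poisson_integral (hlam : 0 < lam) (hq : 0 < q) :
    HasSum (fun k : ℕ => q ^ (2 * k + lam) / (k.factorial * Gamma (k + lam + 1 / 2)))
      (q ^ lam / (√π * Gamma lam) * ∫ u in Ioo (0 : ℝ) 1,
        u ^ (lam - 1) * (1 - u) ^ (1 / 2 - 1 : ℝ) * cosh (2 * q * √(1 - u))) := by
  have hcosh : ∀ u ∈ Ioo (0 : ℝ) 1, HasSum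
      (fun k : ℕ => (2 * q) ^ (2 * k) / (2 * k).factorial * (1 - u) ^ k)
      (cosh (2 * q * √(1 - u))) := fun u hu => by
    refine (hasSum_cosh _).congr_fun fun k => ?_
    rw [mul_pow _ √(1 - u), pow_mul √(1 - u), sq_sqrt (sub_nonneg.2 hu.2.le)]
    ring
  have := (hasSum_integral_beta_mul hlam one_half_pos (fun k => by positivity)
    (Continuous.continuousOn (by fun_prop)) hcosh).mul_left (q ^ lam / (√π * Gamma lam))
  refine this.congr_fun fun k => ?_
  have := Gamma_pos_of_pos hlam
  have := Gamma_pos_of_pos (show 0 < (k : ℝ) + lam + 1 / 2 by positivity)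
  rw [ProbabilityTheory.beta, Gamma_nat_add_half_eq_factorial_div, rpow_add hq,
    show (2 * k : ℝ) = (2 * k : ℕ) by push_cast; rfl, rpow_natCast,
    show lam + (k + 1 / 2) = k + lam + 1 / 2 by ring, mul_pow, pow_mul 2,
    show (2 : ℝ) ^ 2 = 4 by norm_num]
  field_simp

theorem sqrt_mul_besselI_eq_tsum (hq : 0 < q) :
    √q * besselI (lam - 1 / 2) (2 * q) =
      ∑' k : ℕ, q ^ (2 * k + lam) / (k.factorial * Gamma (k + lam + 1 / 2)) := by
  rw [besselI, ← tsum_mul_left]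
  refine tsum_congr fun k => ?_
  rw [sqrt_eq_rpow, mul_div_cancel_left₀ q two_ne_zero, ← mul_div_assoc, ← rpow_add hq]
  ring_nf

theorem sqrt_mul_besselI_eq_integral (hlam : 0 < lam) (hq : 0 < q) :
    √q * besselI (lam - 1 / 2) (2 * q) = q ^ lam / (√π * Gamma lam) * ∫ u in Ioo (0 : ℝ) 1,
      u ^ (lam - 1) * (1 - u) ^ (1 / 2 - 1 : ℝ) * cosh (2 * q * √(1 - u)) := by
  rw [sqrt_mul_besselI_eq_tsum hq, (hasSum_poisson_integral hlam hq).tsum_eq]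

theorem hasSum_sqrt_mul_besselI (hlam : 0 < lam) (hq : 0 < q) :
    HasSum (fun k : ℕ => q ^ (2 * k + lam) / (k.factorial * Gamma (k + lam + 1 / 2)))
      (√q * besselI (lam - 1 / 2) (2 * q)) := by
  rw [sqrt_mul_besselI_eq_integral hlam hq]
  exact hasSum_poisson_integral hlam hq

theorem cosh_two_mul_mul_sqrt_one_sub_le {u : ℝ} (hq : 0 ≤ q) (hu : u ≤ 1) :
    cosh (2 * q * √(1 - u)) ≤ exp (2 * q) * exp (-(q * u)) := by
  have hsqrt : √(1 - u) ≤ 1 - u / 2 := by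
    have := sqrt_one_add_le (show -1 ≤ -u by linarith)
    rwa [neg_div, ← sub_eq_add_neg, ← sub_eq_add_neg] at this
  have hnonneg : 0 ≤ 2 * q * √(1 - u) := by positivity
  calc cosh (2 * q * √(1 - u)) ≤ exp (2 * q * √(1 - u)) := by
        rw [← cosh_add_sinh]
        exact le_add_of_nonneg_right (sinh_nonneg_iff.2 hnonneg)
    _ ≤ exp (2 * q) * exp (-(q * u)) := by
        rw [← exp_add]
        gcongr
        nlinarith

theorem sqrt_mul_besselI_le (hlam : 0 < lam) (hq : 0 < q) :
    √q * besselI (lam - 1 / 2) (2 * q) ≤ exp (2 * q) / √π * betaLaplace lam (1 / 2) q := by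
  have := Gamma_pos_of_pos hlam
  have hweight {u : ℝ} (hu : u ∈ Ioo (0 : ℝ) 1) :
      0 ≤ u ^ (lam - 1) * (1 - u) ^ (1 / 2 - 1 : ℝ) :=
    mul_nonneg (rpow_nonneg hu.1.le _) (rpow_nonneg (sub_nonneg.2 hu.2.le) _)
  have hmono : ∫ u in Ioo (0 : ℝ) 1,
        u ^ (lam - 1) * (1 - u) ^ (1 / 2 - 1 : ℝ) * cosh (2 * q * √(1 - u)) ≤
      ∫ u in Ioo (0 : ℝ) 1,
        exp (2 * q) * (u ^ (lam - 1) * (1 - u) ^ (1 / 2 - 1 : ℝ) * exp (-(q * u))) := by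
    refine setIntegral_mono_on
      ((integrableOn_rpow_mul_one_sub_rpow hlam one_half_pos).mul_continuousOn_of_subset
        (Continuous.continuousOn (by fun_prop)) measurableSet_Ioo isCompact_Icc
        Ioo_subset_Icc_self)
      ((integrableOn_rpow_mul_one_sub_rpow_mul_exp hlam one_half_pos q).const_mul _)
      measurableSet_Ioo fun u hu => ?_
    rw [mul_left_comm]
    exact mul_le_mul_of_nonneg_left (cosh_two_mul_mul_sqrt_one_sub_le hq.le hu.2.le) (hweight hu)
  calc √q * besselI (lam - 1 / 2) (2 * q)
      ≤ q ^ lam / (√π * Gamma lam) * ∫ u in Ioo (0 : ℝ) 1,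
        exp (2 * q) * (u ^ (lam - 1) * (1 - u) ^ (1 / 2 - 1 : ℝ) * exp (-(q * u))) := by
        rw [sqrt_mul_besselI_eq_integral hlam hq]
        gcongr
    _ = exp (2 * q) / √π * betaLaplace lam (1 / 2) q := by
        rw [integral_const_mul, betaLaplace]
        field_simp

end Bessel

section HeatKernel

variable {lam σ t x y p : ℝ}

theorem sqrt_four_mul (t : ℝ) : √(4 * t) = 2 * √t := by
  rw [sqrt_mul zero_le_four, show (4 : ℝ) = 2 ^ 2 by norm_num, sqrt_sq zero_le_two]

theorem besselHeatKernel_eq (ht : 0 < t) (hx : 0 < x) (hy : 0 < y) :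
    besselHeatKernel lam t x y =
      √(x * y / (4 * t)) * besselI (lam - 1 / 2) (2 * (x * y / (4 * t))) *
        (exp (-(x ^ 2 + y ^ 2) / (4 * t)) / √t) := by
  have hsqrt : √(x * y) / (2 * t) = √(x * y / (4 * t)) / √t := by
    rw [sqrt_div (by positivity), sqrt_four_mul, div_div, mul_assoc, mul_self_sqrt ht.le]
  rw [besselHeatKernel, hsqrt, show 2 * (x * y / (4 * t)) = x * y / (2 * t) by ring]
  ring

theorem hasSum_besselHeatKernel (hlam : 0 < lam) (ht : 0 < t) (hx : 0 < x) (hy : 0 < y) :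
    HasSum (fun k : ℕ => (x * y / (4 * t)) ^ (2 * (k : ℝ) + lam) /
      (k.factorial * Gamma (k + lam + 1 / 2)) * (exp (-(x ^ 2 + y ^ 2) / (4 * t)) / √t))
      (besselHeatKernel lam t x y) := by
  rw [besselHeatKernel_eq ht hx hy]
  exact (hasSum_sqrt_mul_besselI hlam (by positivity)).mul_right _

theorem besselHeatKernel_nonneg (hlam : 0 < lam) (ht : 0 < t) (hx : 0 < x) (hy : 0 < y) :
    0 ≤ besselHeatKernel lam t x y :=
  (hasSum_besselHeatKernel hlam ht hx hy).nonneg fun k => by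
    have := Gamma_pos_of_pos (show 0 < (k : ℝ) + lam + 1 / 2 by positivity)
    positivity

theorem aestronglyMeasurable_besselHeatKernel (hlam : 0 < lam) (hx : 0 < x) (hy : 0 < y) :
    AEStronglyMeasurable (fun t => besselHeatKernel lam t x y) (volume.restrict (Ioi 0)) :=
  aestronglyMeasurable_of_hasSum (fun _ => Measurable.aestronglyMeasurable (by fun_prop))
    ((ae_restrict_mem measurableSet_Ioi).mono fun _ ht => hasSum_besselHeatKernel hlam ht hx hy)

theorem exists_besselHeatKernel_le (hlam : 0 < lam) :
    ∃ C, 0 < C ∧ ∀ t x y, 0 < t → 0 < x → 0 < y →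
      besselHeatKernel lam t x y ≤ C * (exp (-((x - y) ^ 2 / 4 / t)) / √t) := by
  obtain ⟨M, hM, hle⟩ := exists_betaLaplace_le hlam one_half_pos
  refine ⟨M / √π, by positivity, fun t x y ht hx hy => ?_⟩
  have hq : 0 < x * y / (4 * t) := by positivity
  calc besselHeatKernel lam t x y
      ≤ exp (2 * (x * y / (4 * t))) / √π * M * (exp (-(x ^ 2 + y ^ 2) / (4 * t)) / √t) := by
        rw [besselHeatKernel_eq ht hx hy]
        refine mul_le_mul_of_nonneg_right ((sqrt_mul_besselI_le hlam hq).trans ?_) (by positivity)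
        gcongr
        exact hle _ hq
    _ = M / √π * (exp (2 * (x * y / (4 * t)) + -(x ^ 2 + y ^ 2) / (4 * t)) / √t) := by
        rw [exp_add]
        ring
    _ = M / √π * (exp (-((x - y) ^ 2 / 4 / t)) / √t) := by
        congr 3
        field_simp
        ring

theorem integral_rpow_mul_gaussian (hp : -1 < p) (ht : 0 < t) (hx : 0 < x) :
    ∫ y in Ioi 0, (x * y / (4 * t)) ^ p * (exp (-(x ^ 2 + y ^ 2) / (4 * t)) / √t) =
      exp (-(x ^ 2 / (4 * t))) * ((x ^ 2 / (4 * t)) ^ (p / 2) * Gamma ((p + 1) / 2)) := by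
  have hsplit : EqOn (fun y => (x * y / (4 * t)) ^ p * (exp (-(x ^ 2 + y ^ 2) / (4 * t)) / √t))
      (fun y => exp (-(x ^ 2 / (4 * t))) * ((x / (4 * t)) ^ p / √t) *
        (y ^ p * exp (-(4 * t)⁻¹ * y ^ (2 : ℝ)))) (Ioi 0) := by
    intro y (hy : 0 < y)
    simp only [show x * y / (4 * t) = x / (4 * t) * y by ring,
      show -(x ^ 2 + y ^ 2) / (4 * t) = -(x ^ 2 / (4 * t)) + -(4 * t)⁻¹ * y ^ 2 by ring,
      mul_rpow (show 0 ≤ x / (4 * t) by positivity) hy.le, exp_add, rpow_two]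
    ring
  have hscale : (x / (4 * t)) ^ p / √t * ((4 * t)⁻¹ ^ (-(p + 1) / 2) * (1 / 2)) =
      (x ^ 2 / (4 * t)) ^ (p / 2) := by
    have hc : 0 < 4 * t := by positivity
    have hpow : (4 * t)⁻¹ ^ (-(p + 1) / 2) = (4 * t) ^ (p / 2) * (2 * √t) := by
      rw [inv_rpow hc.le, ← rpow_neg hc.le, ← sqrt_four_mul, sqrt_eq_rpow, ← rpow_add hc]
      ring_nf
    rw [hpow, show x ^ 2 / (4 * t) = (x / (4 * t)) ^ (2 : ℝ) * (4 * t) by rw [rpow_two]; field_simp,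
      mul_rpow (by positivity) hc.le, ← rpow_mul (by positivity), mul_div_cancel₀ p two_ne_zero]
    field_simp
  rw [setIntegral_congr_fun measurableSet_Ioi hsplit, integral_const_mul,
    integral_rpow_mul_exp_neg_mul_rpow two_pos hp (by positivity), ← hscale]
  ring

theorem integrableOn_rpow_mul_gaussian (hp : -1 < p) (ht : 0 < t) (hx : 0 < x) :
    IntegrableOn (fun y => (x * y / (4 * t)) ^ p * (exp (-(x ^ 2 + y ^ 2) / (4 * t)) / √t))
      (Ioi 0) :=
  .of_integral_ne_zero <| by
    have := Gamma_pos_of_pos (show 0 < (p + 1) / 2 by linarith)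
    rw [integral_rpow_mul_gaussian hp ht hx]
    positivity

theorem heatOne_eq_betaLaplace (hlam : 0 < lam) (ht : 0 < t) (hx : 0 < x) :
    heatOne lam t x = betaLaplace (lam / 2) ((lam + 1) / 2) (x ^ 2 / 4 / t) := by
  have hΓ (k : ℕ) := Gamma_pos_of_pos (show 0 < (k : ℝ) + lam + 1 / 2 by positivity)
  have hp (k : ℕ) : -1 < 2 * (k : ℝ) + lam := by linarith [k.cast_nonneg (α := ℝ)]
  have hterm (k : ℕ) (y : ℝ) : (x * y / (4 * t)) ^ (2 * (k : ℝ) + lam) /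
        (k.factorial * Gamma (k + lam + 1 / 2)) * (exp (-(x ^ 2 + y ^ 2) / (4 * t)) / √t) =
      1 / (k.factorial * Gamma (k + lam + 1 / 2)) *
        ((x * y / (4 * t)) ^ (2 * (k : ℝ) + lam) * (exp (-(x ^ 2 + y ^ 2) / (4 * t)) / √t)) := by
    ring
  refine integral_eq_of_hasSum_of_nonneg (fun k => ?_) (fun k => ?_)
    ((ae_restrict_mem measurableSet_Ioi).mono fun y hy => hasSum_besselHeatKernel hlam ht hx hy) ?_
  · simp only [hterm]
    exact (integrableOn_rpow_mul_gaussian (hp k) ht hx).const_mul _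
  · filter_upwards [ae_restrict_mem measurableSet_Ioi] with y (hy : 0 < y)
    have := hΓ k
    positivity
  · refine (hasSum_betaLaplace (half_pos hlam) (by linarith) (by positivity)).congr_fun fun k => ?_
    simp only [hterm]
    rw [integral_const_mul, integral_rpow_mul_gaussian (hp k) ht hx, div_div,
      show (2 * k + lam) / 2 = k + lam / 2 by ring,
      show (2 * k + lam + 1) / 2 = k + (lam + 1) / 2 by ring,
      show k + (lam / 2 + (lam + 1) / 2) = k + lam + 1 / 2 by ring]
    ring

end HeatKernel

section FractionalPower

variable {lam σ x y r : ℝ}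

theorem exp_neg_div_div_sqrt_mul_rpow {t : ℝ} (ht : 0 < t) :
    exp (-(r / t)) / √t * t ^ (-1 - σ) = exp (-(r / t)) * t ^ (-1 - (σ + 1 / 2)) := by
  rw [sqrt_eq_rpow, div_eq_mul_inv, ← rpow_neg ht.le, mul_assoc, ← rpow_add ht]
  ring_nf

theorem integrableOn_exp_neg_div_div_sqrt_mul_rpow (hσ : -(1 / 2) < σ) (hr : 0 < r) :
    IntegrableOn (fun t => exp (-(r / t)) / √t * t ^ (-1 - σ)) (Ioi 0) := by
  refine IntegrableOn.congr_fun ?_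
    (fun t (ht : 0 < t) => (exp_neg_div_div_sqrt_mul_rpow ht).symm) measurableSet_Ioi
  refine (integrableOn_comp_div_mul_rpow_iff (f := fun w => exp (-w)) hr).2 ?_
  simpa only [mul_comm] using GammaIntegral_convergent (show 0 < σ + 1 / 2 by linarith)

theorem integral_exp_neg_div_div_sqrt_mul_rpow (hσ : -(1 / 2) < σ) (hr : 0 < r) :
    ∫ t in Ioi 0, exp (-(r / t)) / √t * t ^ (-1 - σ) =
      r ^ (-(σ + 1 / 2)) * Gamma (σ + 1 / 2) := by
  rw [setIntegral_congr_fun measurableSet_Ioi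
      fun t (ht : 0 < t) => exp_neg_div_div_sqrt_mul_rpow ht,
    integral_comp_div_mul_rpow (f := fun w => exp (-w)) hr,
    Gamma_eq_integral (show 0 < σ + 1 / 2 by linarith)]
  simp only [mul_comm]

theorem integrableOn_besselHeatKernel_mul_rpow (hlam : 0 < lam) (hσ : -(1 / 2) < σ) (hx : 0 < x)
    (hy : 0 < y) (hxy : x ≠ y) :
    IntegrableOn (fun t => besselHeatKernel lam t x y * t ^ (-1 - σ)) (Ioi 0) := by
  obtain ⟨C, -, hC⟩ := exists_besselHeatKernel_le hlam
  have hr : 0 < (x - y) ^ 2 / 4 := by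
    have := sub_ne_zero.2 hxy
    positivity
  refine ((integrableOn_exp_neg_div_div_sqrt_mul_rpow hσ hr).const_mul C).mono'
    ((aestronglyMeasurable_besselHeatKernel hlam hx hy).mul
      (Measurable.aestronglyMeasurable (by fun_prop))) ?_
  filter_upwards [ae_restrict_mem measurableSet_Ioi] with t (ht : 0 < t)
  rw [norm_of_nonneg (mul_nonneg (besselHeatKernel_nonneg hlam ht hx hy) (by positivity)),
    ← mul_assoc]
  gcongr
  exact hC t x y ht hx hy

theorem gammaNeg_neg (hσ0 : 0 < σ) (hσ1 : σ < 1) : gammaNeg σ < 0 :=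
  div_neg_of_pos_of_neg (Gamma_pos_of_pos (by linarith)) (by nlinarith)

theorem fracKernelK_nonneg (hlam : 0 < lam) (hσ0 : 0 < σ) (hσ1 : σ < 1) (hx : 0 < x)
    (hy : 0 < y) : 0 ≤ fracKernelK lam σ x y :=
  mul_nonneg (one_div_nonneg.2 (neg_nonneg.2 (gammaNeg_neg hσ0 hσ1).le))
    (setIntegral_nonneg measurableSet_Ioi fun _ ht =>
      mul_nonneg (besselHeatKernel_nonneg hlam ht hx hy) (rpow_nonneg (le_of_lt ht) _))

theorem exists_fracKernelK_le (hlam : 0 < lam) (hσ0 : 0 < σ) (hσ1 : σ < 1) :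
    ∃ C, 0 < C ∧ ∀ x y, 0 < x → 0 < y → x ≠ y →
      fracKernelK lam σ x y ≤ C * |x - y| ^ (-1 - 2 * σ) := by
  obtain ⟨C, hC, hle⟩ := exists_besselHeatKernel_le hlam
  have hσ : -(1 / 2) < σ := by linarith
  have hγ : 0 < -gammaNeg σ := neg_pos.2 (gammaNeg_neg hσ0 hσ1)
  have := Gamma_pos_of_pos (show 0 < σ + 1 / 2 by linarith)
  refine ⟨1 / (-gammaNeg σ) * (C * (4 ^ (σ + 1 / 2) * Gamma (σ + 1 / 2))), by positivity,
    fun x y hx hy hxy => ?_⟩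
  have hd : 0 < |x - y| := abs_pos.2 (sub_ne_zero.2 hxy)
  have hr : 0 < (x - y) ^ 2 / 4 := by rw [← sq_abs]; positivity
  have hpow : ((x - y) ^ 2 / 4) ^ (-(σ + 1 / 2)) = 4 ^ (σ + 1 / 2) * |x - y| ^ (-1 - 2 * σ) := by
    rw [← sq_abs, div_rpow (by positivity) zero_le_four, rpow_neg zero_le_four, div_inv_eq_mul,
      ← rpow_two, ← rpow_mul hd.le, mul_comm]
    ring_nf
  have hint : ∫ t in Ioi 0, besselHeatKernel lam t x y * t ^ (-1 - σ) ≤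
      ∫ t in Ioi 0, C * (exp (-((x - y) ^ 2 / 4 / t)) / √t * t ^ (-1 - σ)) := by
    refine setIntegral_mono_on (integrableOn_besselHeatKernel_mul_rpow hlam hσ hx hy hxy)
      ((integrableOn_exp_neg_div_div_sqrt_mul_rpow hσ hr).const_mul C) measurableSet_Ioi
      fun t (ht : 0 < t) => ?_
    rw [← mul_assoc]
    gcongr
    exact hle t x y ht hx hy
  rw [integral_const_mul, integral_exp_neg_div_div_sqrt_mul_rpow hσ hr, hpow] at hint
  calc fracKernelK lam σ x y
      ≤ 1 / (-gammaNeg σ) *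
          (C * (4 ^ (σ + 1 / 2) * |x - y| ^ (-1 - 2 * σ) * Gamma (σ + 1 / 2))) :=
        mul_le_mul_of_nonneg_left hint (by positivity)
    _ = _ := by ring

theorem heatOne_sub_one_mul_rpow_eqOn (hlam : 0 < lam) (hx : 0 < x) :
    EqOn (fun t => (heatOne lam t x - 1) * t ^ (-1 - σ))
      (fun t => (betaLaplace (lam / 2) ((lam + 1) / 2) (x ^ 2 / 4 / t) - 1) * t ^ (-1 - σ))
      (Ioi 0) := fun t ht => by
  simp only [heatOne_eq_betaLaplace hlam ht hx]

theorem integrableOn_heatOne_sub_one_mul_rpow (hlam : 0 < lam) (hσ0 : 0 < σ) (hσ1 : σ < 1)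
    (hx : 0 < x) : IntegrableOn (fun t => (heatOne lam t x - 1) * t ^ (-1 - σ)) (Ioi 0) := by
  rw [integrableOn_congr_fun (heatOne_sub_one_mul_rpow_eqOn hlam hx) measurableSet_Ioi,
    integrableOn_comp_div_mul_rpow_iff
      (f := fun w => betaLaplace (lam / 2) ((lam + 1) / 2) w - 1) (by positivity)]
  exact integrableOn_rpow_mul_betaLaplace_sub_one (by linarith) (by linarith) hσ0 hσ1

theorem fracFunB_eq_mul_rpow (hlam : 0 < lam) (hx : 0 < x) :
    fracFunB lam σ x = fracFunB lam σ 1 * x ^ (-(2 * σ)) := by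
  have hB {z : ℝ} (hz : 0 < z) : fracFunB lam σ z = 1 / gammaNeg σ * ((z ^ 2 / 4) ^ (-σ) *
      ∫ w in Ioi 0, w ^ (σ - 1) * (betaLaplace (lam / 2) ((lam + 1) / 2) w - 1)) := by
    rw [fracFunB, setIntegral_congr_fun measurableSet_Ioi (heatOne_sub_one_mul_rpow_eqOn hlam hz),
      integral_comp_div_mul_rpow
        (f := fun w => betaLaplace (lam / 2) ((lam + 1) / 2) w - 1) (by positivity)]
  have hscale : (x ^ 2 / 4) ^ (-σ) = (1 ^ 2 / 4) ^ (-σ) * x ^ (-(2 * σ)) := by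
    rw [div_eq_mul_one_div, mul_rpow (by positivity) (by norm_num), ← rpow_two, ← rpow_mul hx.le,
      mul_neg, one_pow, mul_comm]
  rw [hB hx, hB one_pos, hscale]
  ring

theorem continuousOn_fracFunB (hlam : 0 < lam) : ContinuousOn (fracFunB lam σ) (Ioi 0) :=
  (continuousOn_const.mul (continuousOn_id.rpow_const fun _ hx => Or.inl (ne_of_gt hx))).congr
    fun _ hx => fracFunB_eq_mul_rpow hlam hx

end FractionalPower

/-- Absolute convergence and estimates for `K_σ^λ` and `B_σ^λ`. -/
theorem kernel_and_B_estimates (lam σ : ℝ) (hlam : 0 < lam) (hσ0 : 0 < σ) (hσ1 : σ < 1) :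
    (∀ x y : ℝ, 0 < x → 0 < y → x ≠ y →
      IntegrableOn (fun t => besselHeatKernel lam t x y * t ^ (-1 - σ)) (Set.Ioi 0)) ∧
    (∀ x : ℝ, 0 < x →
      IntegrableOn (fun t => (heatOne lam t x - 1) * t ^ (-1 - σ)) (Set.Ioi 0)) ∧
    ∃ C : ℝ, 0 < C ∧
      (∀ x y : ℝ, 0 < x → 0 < y → x ≠ y →
        0 ≤ fracKernelK lam σ x y ∧ fracKernelK lam σ x y ≤ C * |x - y| ^ (-1 - 2 * σ)) ∧
      (∀ x : ℝ, 0 < x → |fracFunB lam σ x| ≤ C * x ^ (-(2 * σ))) ∧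
      ContinuousOn (fracFunB lam σ) (Set.Ioi 0) := by
  obtain ⟨C, hC, hK⟩ := exists_fracKernelK_le hlam hσ0 hσ1
  refine ⟨fun x y hx hy hxy =>
      integrableOn_besselHeatKernel_mul_rpow hlam (by linarith) hx hy hxy,
    fun x hx => integrableOn_heatOne_sub_one_mul_rpow hlam hσ0 hσ1 hx,
    C + |fracFunB lam σ 1|, by positivity, fun x y hx hy hxy =>
      ⟨fracKernelK_nonneg hlam hσ0 hσ1 hx hy, (hK x y hx hy hxy).trans ?_⟩, fun x hx => ?_,
    continuousOn_fracFunB hlam⟩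
  · gcongr
    exact le_add_of_nonneg_right (abs_nonneg _)
  · rw [fracFunB_eq_mul_rpow hlam hx, abs_mul, abs_of_pos (rpow_pos_of_pos hx _)]
    gcongr
    exact le_add_of_nonneg_left hC.le
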